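/- For the extended η-μ density f(γ) as above, the Laplace transform ∫₀^∞ e^{-sγ} f(γ) dγ equals (1 + γ̄ s/(ξμ))^{-μ/(1+p)} · (1 + η γ̄ s/(p ξ μ))^{-μ p/(1+p)} for all s ≥ 0. -/

import Mathlib

/-!
Put `A = μξ/γ̄`, `a = μp/(1+p)`, `S = s + A` and `x = A(η-p)/η`. Up to constants the transform is
`∫ γ^(μ-1) e^(-Sγ) ₁F₁(a; μ; xγ) dγ`. Integrating the Kummer series term by term against the
Gamma integral leaves the binomial series of `(1 - x/S)^(-a)`, whence the value
`Γ(μ) S^(a-μ) (S-x)^(-a)`, and `S - x = s + Ap/η`.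

This exchange is legitimate only when `|x| < S`, which fails for small `s` if `p > 2η`. For
`x < 0` the integrand is therefore first rewritten by Kummer's transformation
`₁F₁(a; b; z) = e^z ₁F₁(b-a; b; -z)`, which replaces `(S, x)` by `(S - x, -x)` and makes all terms
nonnegative (`0 < a < μ` is used here). Kummer's transformation is obtained from the Cauchy product
of the two series and a Chu–Vandermonde identity for rising factorials.
-/

open MeasureTheory Real Set

/-- Rising factorial (Pochhammer symbol) `(x)_n`. -/
noncomputable def pochh (x : ℝ) (n : ℕ) : ℝ := ∏ i ∈ Finset.range n, (x + i)

/-- Kummer's confluent hypergeometric function `₁F₁(a; b; z)`. -/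
noncomputable def oneF1 (a b z : ℝ) : ℝ :=
  ∑' n : ℕ, pochh a n * z ^ n / (pochh b n * n.factorial)

/-- Humbert's two-variable confluent hypergeometric function `Φ₂`. -/
noncomputable def Phi2 (b1 b2 c x y : ℝ) : ℝ :=
  ∑' q : ℕ × ℕ, pochh b1 q.1 * pochh b2 q.2 * x ^ q.1 * y ^ q.2 /
    (pochh c (q.1 + q.2) * q.1.factorial * q.2.factorial)

/-- `N`-variable confluent hypergeometric function `Φ₂^{(N)}`. -/
noncomputable def PhiN {ι : Type*} [Fintype ι] (b : ι → ℝ) (c : ℝ) (x : ι → ℝ) : ℝ :=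
  ∑' m : ι → ℕ,
    (∏ i, pochh (b i) (m i) * x i ^ m i / (m i).factorial) / pochh c (∑ i, m i)

/-- Lauricella `F_D` (Appell `F₁`) of two variables. -/
noncomputable def FD2 (a b1 b2 c y1 y2 : ℝ) : ℝ :=
  ∑' q : ℕ × ℕ, pochh a (q.1 + q.2) * pochh b1 q.1 * pochh b2 q.2 * y1 ^ q.1 * y2 ^ q.2 /
    (pochh c (q.1 + q.2) * q.1.factorial * q.2.factorial)

/-- The extended η-μ instantaneous SNR probability density function. -/
noncomputable def extEtaMuPDF (μ γbar η p γ : ℝ) : ℝ :=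
  (1 / Real.Gamma μ) *
    ((μ * ((1 + η) / (1 + p)) / γbar) * (p / η) ^ (p / (1 + p))) ^ μ *
    γ ^ (μ - 1) * Real.exp (-(μ * ((1 + η) / (1 + p)) / γbar) * γ) *
    oneF1 (μ * p / (1 + p)) μ (μ * ((1 + η) / (1 + p)) * (η - p) / (η * γbar) * γ)

lemma pochh_zero (a : ℝ) : pochh a 0 = 1 := by simp [pochh]

lemma pochh_succ (a : ℝ) (n : ℕ) : pochh a (n + 1) = pochh a n * (a + n) := by
  simp [pochh, Finset.prod_range_succ]

lemma pochh_succ_left (a : ℝ) (n : ℕ) : pochh a (n + 1) = a * pochh (a + 1) n := by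
  simp only [pochh, Finset.prod_range_succ']
  rw [mul_comm]
  congr 1
  · simp
  · refine Finset.prod_congr rfl fun i _ => ?_
    push_cast; ring

lemma pochh_pos {a : ℝ} (ha : 0 < a) (n : ℕ) : 0 < pochh a n :=
  Finset.prod_pos fun i _ => by positivity

lemma pochh_le {a b : ℝ} (ha : 0 < a) (hab : a ≤ b) (n : ℕ) : pochh a n ≤ pochh b n :=
  Finset.prod_le_prod (fun i _ => by positivity) fun i _ => by linarith

lemma Gamma_add_nat {b : ℝ} (hb : 0 < b) (n : ℕ) :
    Real.Gamma (b + n) = pochh b n * Real.Gamma b := by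
  induction n with
  | zero => simp [pochh_zero]
  | succ n ih =>
    have : b + n ≠ 0 := by positivity
    push_cast
    rw [← add_assoc, Real.Gamma_add_one this, ih, pochh_succ]
    ring

lemma choose_eq_pochh (a : ℝ) (n : ℕ) :
    Ring.choose (a + n - 1) n = pochh a n / n.factorial := by
  have hn : (n.factorial : ℝ) ≠ 0 := by positivity
  rw [← Ring.multichoose_eq, eq_div_iff hn, mul_comm, ← nsmul_eq_mul,
    Ring.factorial_nsmul_multichoose_eq_ascPochhammer, Polynomial.ascPochhammer_smeval_eq_eval]
  induction n with
  | zero => simp [pochh_zero]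
  | succ n ih => rw [ascPochhammer_succ_eval, ih (by positivity), pochh_succ]

/-- The binomial series `∑ (a)ₙ yⁿ / n! = (1 - y)^(-a)` for `0 ≤ y < 1`. -/
lemma hasSum_pochh {a y : ℝ} (hy : 0 ≤ y) (hy1 : y < 1) :
    HasSum (fun n : ℕ => pochh a n / n.factorial * y ^ n) ((1 - y) ^ (-a)) := by
  have h := (Real.one_div_one_sub_rpow_hasFPowerSeriesOnBall_zero a).hasSum (y := y) (by
    rw [← ENNReal.ofReal_one, Metric.eball_ofReal]
    simpa [abs_of_nonneg hy] using hy1)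
  rw [Real.rpow_neg (by linarith)]
  simpa [choose_eq_pochh, mul_comm] using h

/-- The Chu–Vandermonde identity: `∑ₖ C(n,k) (-1)ᵏ (c)ₖ / (b)ₖ = (b-c)ₙ / (b)ₙ`. By Pascal's rule the sum
`T(n, b, c)` satisfies `T(n+1, b, c) = T(n, b, c) - (c/b) T(n, b+1, c+1)`. -/
lemma chu_vandermonde (n : ℕ) : ∀ {b : ℝ} (_ : 0 < b) (c : ℝ),
    ∑ ij ∈ Finset.HasAntidiagonal.antidiagonal n,
      (n.choose ij.1 : ℝ) * ((-1) ^ ij.1 * pochh c ij.1 / pochh b ij.1)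
      = pochh (b - c) n / pochh b n := by
  induction n with
  | zero => intro b _ c; simp [pochh_zero]
  | succ n ih =>
    intro b hb c
    rw [Finset.sum_antidiagonal_choose_succ_mul
      (fun i _ => (-1) ^ i * pochh c i / pochh b i) n, ih hb c]
    have h2 : ∑ ij ∈ Finset.HasAntidiagonal.antidiagonal n,
        (n.choose ij.2 : ℝ) * ((-1) ^ (ij.1 + 1) * pochh c (ij.1 + 1) / pochh b (ij.1 + 1))
        = -(c / b) * (pochh (b - c) n / pochh (b + 1) n) := by
      have h3 := ih (b := b + 1) (by linarith) (c + 1)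
      rw [show b + 1 - (c + 1) = b - c by ring] at h3
      rw [← h3, Finset.mul_sum]
      refine Finset.sum_congr rfl fun ij hij => ?_
      rw [Nat.choose_symm_of_eq_add (Finset.HasAntidiagonal.mem_antidiagonal.1 hij).symm,
        pochh_succ_left, pochh_succ_left]
      have := (pochh_pos (show 0 < b + 1 by linarith) ij.1).ne'
      field_simp
      ring
    have e := pochh_succ_left b n
    rw [pochh_succ] at e
    have p1 := (pochh_pos hb n).ne'
    have p2 := (pochh_pos (show 0 < b + 1 by linarith) n).ne'
    have p3 : b + n ≠ 0 := by positivity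
    have e' : pochh (b + 1) n = pochh b n * (b + n) / b := by
      rw [e]; field_simp
    rw [h2, pochh_succ, pochh_succ, e']
    field_simp
    ring

lemma summable_oneF1 {a b : ℝ} (ha : 0 < a) (hab : a ≤ b) (z : ℝ) :
    Summable fun n : ℕ => ‖pochh a n * z ^ n / (pochh b n * n.factorial)‖ := by
  refine Summable.of_nonneg_of_le (fun _ => norm_nonneg _) (fun n => ?_)
    (Real.summable_pow_div_factorial |z|)
  have hb := pochh_pos (ha.trans_le hab) n
  have hp := pochh_pos ha n
  rw [Real.norm_eq_abs, abs_div, abs_mul, abs_mul, abs_pow, abs_of_pos hb, abs_of_pos hp,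
    Nat.abs_cast, mul_div_mul_comm]
  exact mul_le_of_le_one_left (by positivity) ((div_le_one hb).2 (pochh_le ha hab n))

/-- Kummer's transformation, for parameters making both series dominated by an exponential. -/
lemma oneF1_kummer {a b : ℝ} (ha : 0 < a) (hab : a < b) (z : ℝ) :
    oneF1 a b z = Real.exp z * oneF1 (b - a) b (-z) := by
  have hexp : Real.exp z = ∑' n : ℕ, z ^ n / n.factorial := by
    rw [Real.exp_eq_exp_ℝ, NormedSpace.exp_eq_tsum_div]
  have hb : 0 < b := ha.trans hab
  rw [mul_comm, hexp, oneF1, oneF1, tsum_mul_tsum_eq_tsum_sum_antidiagonal_of_summable_norm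
    (summable_oneF1 (by linarith) (by linarith) _) (Real.summable_pow_div_factorial z).norm]
  refine tsum_congr fun n => ?_
  have h := chu_vandermonde n hb (b - a)
  rw [sub_sub_cancel] at h
  rw [show pochh a n * z ^ n / (pochh b n * n.factorial)
    = z ^ n / n.factorial * (pochh a n / pochh b n) by rw [div_mul_div_comm]; ring, ← h,
    Finset.mul_sum]
  refine Finset.sum_congr rfl fun ij hij => ?_
  obtain ⟨i, j⟩ := ij
  have hij : i + j = n := Finset.HasAntidiagonal.mem_antidiagonal.1 hij
  subst hij
  rw [Nat.cast_add_choose, neg_pow z, pow_add]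
  have := (pochh_pos hb i).ne'
  field_simp

/-- The Laplace transform of `γ^(b-1) ₁F₁(a; b; xγ)` for `x ≥ 0`, where the Kummer series has
nonnegative terms and may be integrated term by term. -/
lemma laplace_oneF1_of_nonneg {a b S x : ℝ} (ha : 0 < a) (hb : 0 < b) (hx : 0 ≤ x) (hxS : x < S) :
    ∫ γ in Ioi (0 : ℝ), γ ^ (b - 1) * Real.exp (-(S * γ)) * oneF1 a b (x * γ) =
      Real.Gamma b * S ^ (a - b) * (S - x) ^ (-a) := by
  have hS : 0 < S := hx.trans_lt hxS
  set c : ℕ → ℝ := fun n => pochh a n * x ^ n / (pochh b n * n.factorial) with hc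
  have hc0 : ∀ n, 0 ≤ c n := fun n => by
    have := pochh_pos ha n
    have := pochh_pos hb n
    positivity
  set F : ℕ → ℝ → ℝ := fun n γ => c n * (γ ^ (b + n - 1) * Real.exp (-(S * γ))) with hF
  have hint : ∀ n : ℕ, ∫ γ in Ioi (0 : ℝ), γ ^ (b + n - 1) * Real.exp (-(S * γ))
      = (1 / S) ^ (b + n) * Real.Gamma (b + n) := fun n =>
    Real.integral_rpow_mul_exp_neg_mul_Ioi (by positivity) hS
  have hFi : ∀ n, Integrable (F n) (volume.restrict (Ioi 0)) := fun n => by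
    refine Integrable.const_mul (Integrable.of_integral_ne_zero ?_) _
    rw [hint]
    have : 0 < Real.Gamma (b + n) := Real.Gamma_pos_of_pos (by positivity)
    positivity
  have hval : ∀ n, ∫ γ in Ioi (0 : ℝ), F n γ
      = (1 / S) ^ b * Real.Gamma b * (pochh a n / n.factorial * (x / S) ^ n) := fun n => by
    simp only [hF, hc]
    rw [integral_const_mul, hint, Gamma_add_nat hb, Real.rpow_add (by positivity),
      Real.rpow_natCast, div_pow, div_pow, one_pow]
    have := (pochh_pos hb n).ne'
    field_simp
  have hnorm : ∀ n, ∫ γ in Ioi (0 : ℝ), ‖F n γ‖ = ∫ γ in Ioi (0 : ℝ), F n γ := fun n => by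
    refine setIntegral_congr_fun measurableSet_Ioi fun γ hγ => ?_
    have hγ : 0 < γ := hγ
    exact Real.norm_of_nonneg (mul_nonneg (hc0 n) (by positivity))
  have hs := (hasSum_pochh (a := a) (div_nonneg hx hS.le) ((div_lt_one hS).2 hxS)).mul_left
    ((1 / S) ^ b * Real.Gamma b)
  have hsum := hasSum_integral_of_summable_integral_norm hFi (by
    simp only [hnorm, hval]
    exact hs.summable)
  simp only [hval] at hsum
  have key := hsum.unique hs
  have hcongr : ∫ γ in Ioi (0 : ℝ), γ ^ (b - 1) * Real.exp (-(S * γ)) * oneF1 a b (x * γ)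
      = ∫ γ in Ioi (0 : ℝ), ∑' n, F n γ := by
    refine setIntegral_congr_fun measurableSet_Ioi fun γ hγ => ?_
    have hγ : 0 < γ := hγ
    simp only [oneF1]
    rw [← tsum_mul_left]
    refine tsum_congr fun n => ?_
    simp only [hF, hc]
    rw [show b + (n : ℝ) - 1 = b - 1 + n by ring, Real.rpow_add hγ, Real.rpow_natCast, mul_pow]
    ring
  rw [hcongr, key, show 1 - x / S = (S - x) / S by field_simp,
    Real.div_rpow (by linarith : 0 ≤ S - x) hS.le, one_div, Real.inv_rpow hS.le, Real.rpow_neg hS.le,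
    Real.rpow_sub hS]
  have := (Real.rpow_pos_of_pos hS a).ne'
  have := (Real.rpow_pos_of_pos hS b).ne'
  field_simp

/-- The same formula for either sign of `x`; for `x < 0` Kummer's transformation trades the data
`(a, S, x)` for `(b - a, S - x, -x)`, under which the right-hand side is invariant. -/
lemma laplace_oneF1 {a b S x : ℝ} (ha : 0 < a) (hab : a < b) (hS : 0 < S) (hxS : x < S) :
    ∫ γ in Ioi (0 : ℝ), γ ^ (b - 1) * Real.exp (-(S * γ)) * oneF1 a b (x * γ) =
      Real.Gamma b * S ^ (a - b) * (S - x) ^ (-a) := by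
  rcases le_or_gt 0 x with hx | hx
  · exact laplace_oneF1_of_nonneg ha (ha.trans hab) hx hxS
  · have h := laplace_oneF1_of_nonneg (a := b - a) (b := b) (S := S - x) (x := -x)
      (by linarith) (by linarith) (by linarith) (by linarith)
    rw [show S - x - -x = S by ring, show b - a - b = -a by ring,
      show -(b - a) = a - b by ring] at h
    rw [mul_right_comm, ← h]
    congr 1
    ext γ
    rw [oneF1_kummer ha hab, show -(x * γ) = -x * γ by ring,
      show -((S - x) * γ) = -(S * γ) + x * γ by ring, Real.exp_add]
    ring

theorem stmt4 (μ γbar η p : ℝ) (hμ : 0 < μ) (hγ : 0 < γbar) (hη : 0 < η) (hp : 0 < p) :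
    ∀ s : ℝ, 0 ≤ s →
      ∫ γ in Ioi (0 : ℝ), Real.exp (-s * γ) * extEtaMuPDF μ γbar η p γ =
        (1 + γbar * s / (((1 + η) / (1 + p)) * μ)) ^ (-(μ / (1 + p))) *
          (1 + η * γbar * s / (p * ((1 + η) / (1 + p)) * μ)) ^ (-(μ * p / (1 + p))) := by
  intro s hs
  set A : ℝ := μ * ((1 + η) / (1 + p)) / γbar with hA
  set a : ℝ := μ * p / (1 + p) with ha
  have hA0 : 0 < A := by positivity
  have ha0 : 0 < a := by positivity
  have hac : μ / (1 + p) = μ - a := by rw [ha]; field_simp; ring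
  have haμ : a < μ := by
    have : 0 < μ / (1 + p) := by positivity
    linarith
  have hB0 : 0 < A * (p / η) := by positivity
  have hS : 0 < s + A := by positivity
  set X : ℝ := A * (η - p) / η with hX
  have hSX : s + A - X = s + A * (p / η) := by rw [hX]; field_simp; ring
  have hT : 0 < s + A * (p / η) := by positivity
  have h := laplace_oneF1 (S := s + A) (x := X) ha0 haμ hS (by linarith)
  have hI : ∫ γ in Ioi (0 : ℝ), Real.exp (-s * γ) * extEtaMuPDF μ γbar η p γ
      = (1 / Real.Gamma μ * (A * (p / η) ^ (p / (1 + p))) ^ μ) *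
        ∫ γ in Ioi (0 : ℝ), γ ^ (μ - 1) * Real.exp (-((s + A) * γ)) * oneF1 a μ (X * γ) := by
    rw [← integral_const_mul]
    congr 1
    ext γ
    rw [extEtaMuPDF, ← hA, ← ha,
      show μ * ((1 + η) / (1 + p)) * (η - p) / (η * γbar) = X by rw [hX, hA]; field_simp,
      show -((s + A) * γ) = -s * γ + -A * γ by ring, Real.exp_add]
    ring
  have e1 : 1 + γbar * s / ((1 + η) / (1 + p) * μ) = (s + A) / A := by
    rw [hA]; field_simp; ring
  have e2 : 1 + η * γbar * s / (p * ((1 + η) / (1 + p)) * μ)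
      = (s + A * (p / η)) / (A * (p / η)) := by
    rw [hA]; field_simp; ring
  have e3 : (A * (p / η) ^ (p / (1 + p))) ^ μ = A ^ (μ - a) * (A * (p / η)) ^ a := by
    rw [Real.mul_rpow hA0.le (by positivity), ← Real.rpow_mul (by positivity),
      Real.mul_rpow hA0.le (by positivity), ← mul_assoc, ← Real.rpow_add hA0]
    congr 2
    · ring
    · rw [ha]; ring
  rw [hI, h, hSX, e1, e2, e3, hac, Real.div_rpow hS.le hA0.le, Real.div_rpow hT.le hB0.le,
    Real.rpow_neg hA0.le, Real.rpow_neg hB0.le, neg_sub]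
  have := (Real.Gamma_pos_of_pos hμ).ne'
  field_simp
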